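/- arXiv:math/0701265 — 6 statements merged into one kernel-verified Lean document; each statement's English description precedes it below -/
import Mathlib

section
/- Let α ≥ 2 and β₁, β₂ > 0, and let x, y : ℤ → ℂ be sequences satisfying |x_n| ≤ β₁/(|n|+1)^α and |y_n| ≤ β₂/(|n|+1)^α for all n ∈ ℤ. Then for every n ∈ ℤ the series Σ_{k∈ℤ} x_k y_{n-k} converges absolutely, and the convolution satisfies |(x*y)_n| ≤ C · β₁β₂/(|n|+1)^α, where C = 2(2α+1)/(α-1). -/
open scoped Real
open Complex Filter

/-- Convolution of two two-sided sequences of complex numbers. -/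
noncomputable def conv (x y : ℤ → ℂ) : ℤ → ℂ := fun n => ∑' k : ℤ, x k * y (n - k)

/-- `convPow x k` is the `k`-fold convolution power `x^{*k}`;
`x^{*0}` is the unit (Kronecker delta at `0`). -/
noncomputable def convPow (x : ℤ → ℂ) : ℕ → ℤ → ℂ
  | 0 => fun n => if n = 0 then 1 else 0
  | k + 1 => conv (convPow x k) x

/-- Membership in `X_β`: decay `|x_n| ≤ β/(|n|+1)^2` and the symmetry `x_{-n} = conj x_n`. -/
def memX (β : ℝ) (x : ℤ → ℂ) : Prop :=
  (∀ n : ℤ, ‖x n‖ ≤ β / (|(n : ℝ)| + 1) ^ 2) ∧ (∀ n : ℤ, x (-n) = starRingEnd ℂ (x n))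

/-!
Write `r = (|n| + 1) / ((|k| + 1) (|n - k| + 1))`, so that the claim is a bound on `∑ₖ r ^ α`
uniform in `n`. By the symmetries `k ↦ n - k` and `(n, k) ↦ (-n, -k)` one may take `n ≥ 0` and
`2 k ≤ n`. Then `r ≤ 1 / (|k| + 1)` for `k ≤ 0` and `r ≤ 2 / (k + 1)` for `k > 0`, and the integral
test bounds the sum of `α`-th powers of this majorant by
`1 + 1 / (α - 1) + (1 + 2 / (α - 1)) = (2 α + 1) / (α - 1)`; the factor `2` in the constant pays for
folding `k ↦ n - k`.
-/

section IntegralTest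

open Set MeasureTheory

variable {c α : ℝ}

lemma antitoneOn_add_rpow_neg (hc : 0 < c) (hα : 0 ≤ α) :
    AntitoneOn (fun t : ℝ => (t + c) ^ (-α)) (Ici 0) := fun s hs t _ hst =>
  Real.rpow_le_rpow_of_nonpos (add_pos_of_nonneg_of_pos hs hc) (by gcongr) (neg_nonpos.2 hα)

lemma integrableOn_add_rpow_neg (hc : 0 < c) (hα : 1 < α) :
    IntegrableOn (fun t : ℝ => (t + c) ^ (-α)) (Ioi 0) :=
  integrableOn_add_rpow_Ioi_of_lt (by linarith) (by linarith)

lemma integral_Ioi_add_rpow_neg (hc : 0 < c) (hα : 1 < α) :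
    ∫ t in Ioi (0 : ℝ), (t + c) ^ (-α) = c ^ (1 - α) / (α - 1) := by
  have translate := (measurePreserving_add_right volume c).setIntegral_preimage_emb
    (measurableEmbedding_addRight c) (fun t : ℝ => t ^ (-α)) (Ioi c)
  rw [preimage_add_const_Ioi, sub_self] at translate
  rw [translate, integral_Ioi_rpow_of_lt (by linarith) hc, neg_add_eq_sub, ← neg_sub α 1,
    neg_div_neg_eq]

lemma div_add_rpow_eq (hc : 0 ≤ c) {t : ℝ} (ht : 0 ≤ t) :
    (c / (t + c)) ^ α = c ^ α * (t + c) ^ (-α) := by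
  rw [Real.div_rpow hc (by positivity), Real.rpow_neg (by positivity), div_eq_mul_inv]

lemma summable_div_add_rpow (hc : 0 < c) (hα : 1 < α) :
    Summable fun j : ℕ => (c / (j + c)) ^ α := by
  have summable_shift : Summable fun j : ℕ => ((j : ℝ) + c) ^ (-α) :=
    (antitoneOn_add_rpow_neg hc (by linarith)).summable_of_integrableOn_Ioi_zero
      (integrableOn_add_rpow_neg hc hα) fun t ht => Real.rpow_nonneg (add_pos ht hc).le _
  exact (summable_shift.mul_left (c ^ α)).congr fun j => (div_add_rpow_eq hc.le j.cast_nonneg).symm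

lemma tsum_div_add_one_rpow_le (hc : 0 < c) (hα : 1 < α) :
    ∑' j : ℕ, (c / ((j + 1 : ℕ) + c)) ^ α ≤ c / (α - 1) :=
  calc ∑' j : ℕ, (c / ((j + 1 : ℕ) + c)) ^ α
      = c ^ α * ∑' j : ℕ, (((j + 1 : ℕ) : ℝ) + c) ^ (-α) := by
        rw [← tsum_mul_left]
        exact tsum_congr fun j => div_add_rpow_eq hc.le (j + 1).cast_nonneg
    _ ≤ c ^ α * ∫ t in Ioi (0 : ℝ), (t + c) ^ (-α) := by
        gcongr
        exact (antitoneOn_add_rpow_neg hc (by linarith)).tsum_add_one_le_integral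
          (integrableOn_add_rpow_neg hc hα) fun t ht => Real.rpow_nonneg (add_pos ht hc).le _
    _ = c / (α - 1) := by
        rw [integral_Ioi_add_rpow_neg hc hα, ← mul_div_assoc, ← Real.rpow_add hc,
          add_sub_cancel, Real.rpow_one]

end IntegralTest

/-- The weight `(|n| + 1) / ((|k| + 1) (|n - k| + 1))`, whose `α`-th power is the `k`-th term of the
convolution of `(|k| + 1) ^ (-α)` with itself at `n`, relative to `(|n| + 1) ^ (-α)`. -/
noncomputable def convRatio (n k : ℤ) : ℝ :=
  (|(n : ℝ)| + 1) / ((|(k : ℝ)| + 1) * (|((n - k : ℤ) : ℝ)| + 1))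

lemma convRatio_nonneg (n k : ℤ) : 0 ≤ convRatio n k := by
  unfold convRatio
  positivity

lemma convRatio_sub_right (n k : ℤ) : convRatio n (n - k) = convRatio n k := by
  rw [convRatio, convRatio, sub_sub_cancel, mul_comm (|(k : ℝ)| + 1)]

lemma convRatio_neg_neg (n k : ℤ) : convRatio (-n) (-k) = convRatio n k := by
  rw [convRatio, convRatio, ← neg_sub', Int.cast_neg, Int.cast_neg, Int.cast_neg, abs_neg, abs_neg,
    abs_neg]

/-- The majorant of `convRatio n k` that is independent of `n`, valid on the near half `2 k ≤ n` of
the summation range when `0 ≤ n`. -/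
noncomputable def halfMajorant (k : ℤ) : ℝ :=
  if 0 < k then 2 / ((k : ℝ) + 1) else 1 / (|(k : ℝ)| + 1)

lemma halfMajorant_nonneg (k : ℤ) : 0 ≤ halfMajorant k := by
  unfold halfMajorant
  split_ifs <;> positivity

lemma convRatio_le_halfMajorant {n k : ℤ} (hn : 0 ≤ n) (hk : 2 * k ≤ n) :
    convRatio n k ≤ halfMajorant k := by
  have hn' : (0 : ℝ) ≤ n := mod_cast hn
  have hk' : 2 * (k : ℝ) ≤ n := mod_cast hk
  have hnk : (0 : ℝ) ≤ n - k := by linarith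
  rw [convRatio, halfMajorant, Int.cast_sub, abs_of_nonneg hn', abs_of_nonneg hnk]
  split_ifs with hpos
  · have hpos' : (0 : ℝ) < k := mod_cast hpos
    rw [abs_of_pos hpos', div_le_div_iff₀ (by positivity) (by positivity)]
    nlinarith
  · have hnonpos : (k : ℝ) ≤ 0 := mod_cast not_lt.1 hpos
    rw [div_le_div_iff₀ (by positivity) (by positivity), one_mul, mul_comm]
    gcongr
    linarith

lemma convRatio_rpow_le_add {n : ℤ} (hn : 0 ≤ n) {α : ℝ} (hα : 0 ≤ α) (k : ℤ) :
    convRatio n k ^ α ≤ halfMajorant k ^ α + halfMajorant (n - k) ^ α := by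
  have rpow_le_of_near {j : ℤ} (hj : 2 * j ≤ n) : convRatio n j ^ α ≤ halfMajorant j ^ α :=
    Real.rpow_le_rpow (convRatio_nonneg n j) (convRatio_le_halfMajorant hn hj) hα
  rcases le_total (2 * k) n with near | far
  · exact (rpow_le_of_near near).trans
      (le_add_of_nonneg_right (Real.rpow_nonneg (halfMajorant_nonneg _) α))
  · rw [← convRatio_sub_right]
    exact (rpow_le_of_near (by linarith)).trans
      (le_add_of_nonneg_left (Real.rpow_nonneg (halfMajorant_nonneg _) α))

lemma halfMajorant_zero : halfMajorant 0 = 1 := by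
  simp [halfMajorant]

lemma halfMajorant_natCast_add_one (j : ℕ) : halfMajorant ((j + 1 : ℕ) : ℤ) = 2 / (j + 2) := by
  rw [halfMajorant, if_pos (by positivity)]
  push_cast
  ring

lemma halfMajorant_neg_natCast_add_one (j : ℕ) :
    halfMajorant (-(j + 1 : ℤ)) = 1 / ((j + 1 : ℕ) + 1) := by
  rw [halfMajorant, if_neg (by lia)]
  push_cast
  rw [abs_neg, abs_of_nonneg (by positivity)]

section ConvRatioSum

variable {α : ℝ}

lemma summable_halfMajorant_natCast_rpow (hα : 1 < α) :
    Summable fun j : ℕ => halfMajorant j ^ α := by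
  rw [← summable_nat_add_iff 1]
  simpa only [halfMajorant_natCast_add_one] using summable_div_add_rpow two_pos hα

lemma summable_halfMajorant_neg_rpow (hα : 1 < α) :
    Summable fun j : ℕ => halfMajorant (-(j + 1 : ℤ)) ^ α := by
  simpa only [halfMajorant_neg_natCast_add_one] using
    (summable_nat_add_iff 1).2 (summable_div_add_rpow one_pos hα)

lemma summable_halfMajorant_rpow (hα : 1 < α) : Summable fun k : ℤ => halfMajorant k ^ α :=
  (summable_halfMajorant_natCast_rpow hα).of_nat_of_neg_add_one (summable_halfMajorant_neg_rpow hα)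

lemma tsum_halfMajorant_natCast_rpow_le (hα : 1 < α) :
    ∑' j : ℕ, halfMajorant j ^ α ≤ 2 + 2 / (α - 1) := by
  have split_two_terms : ∑' j : ℕ, halfMajorant j ^ α
      = 1 + (1 + ∑' j : ℕ, (2 / ((j + 1 : ℕ) + 2 : ℝ)) ^ α) := by
    rw [(summable_halfMajorant_natCast_rpow hα).tsum_eq_zero_add]
    simp only [halfMajorant_natCast_add_one]
    rw [(summable_div_add_rpow two_pos hα).tsum_eq_zero_add]
    simp [halfMajorant_zero]
  linarith [tsum_div_add_one_rpow_le two_pos hα]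

lemma tsum_halfMajorant_neg_rpow_le (hα : 1 < α) :
    ∑' j : ℕ, halfMajorant (-(j + 1 : ℤ)) ^ α ≤ 1 / (α - 1) := by
  simpa only [halfMajorant_neg_natCast_add_one] using tsum_div_add_one_rpow_le one_pos hα

lemma tsum_halfMajorant_rpow_le (hα : 1 < α) :
    ∑' k : ℤ, halfMajorant k ^ α ≤ (2 * α + 1) / (α - 1) := by
  have hα' : α - 1 ≠ 0 := by linarith
  calc ∑' k : ℤ, halfMajorant k ^ α
      = ∑' j : ℕ, halfMajorant j ^ α + ∑' j : ℕ, halfMajorant (-(j + 1 : ℤ)) ^ α :=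
        tsum_of_nat_of_neg_add_one (summable_halfMajorant_natCast_rpow hα)
          (summable_halfMajorant_neg_rpow hα)
    _ ≤ (2 + 2 / (α - 1)) + 1 / (α - 1) :=
        add_le_add (tsum_halfMajorant_natCast_rpow_le hα) (tsum_halfMajorant_neg_rpow_le hα)
    _ = (2 * α + 1) / (α - 1) := by field_simp; ring

lemma summable_convRatio_rpow_and_tsum_le_of_nonneg (hα : 1 < α) {n : ℤ} (hn : 0 ≤ n) :
    Summable (fun k => convRatio n k ^ α) ∧
      ∑' k, convRatio n k ^ α ≤ 2 * (2 * α + 1) / (α - 1) := by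
  have near := summable_halfMajorant_rpow hα
  have far : Summable fun k => halfMajorant (n - k) ^ α := (Equiv.subLeft n).summable_iff.2 near
  have tsum_far : ∑' k, halfMajorant (n - k) ^ α = ∑' k, halfMajorant k ^ α :=
    (Equiv.subLeft n).tsum_eq fun k => halfMajorant k ^ α
  have le_add := convRatio_rpow_le_add hn (α := α) (by linarith)
  have summable_ratio : Summable fun k => convRatio n k ^ α :=
    (near.add far).of_nonneg_of_le (fun k => Real.rpow_nonneg (convRatio_nonneg n k) α) le_add
  refine ⟨summable_ratio, ?_⟩
  calc ∑' k, convRatio n k ^ α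
      ≤ ∑' k, (halfMajorant k ^ α + halfMajorant (n - k) ^ α) :=
        summable_ratio.tsum_le_tsum le_add (near.add far)
    _ = 2 * ∑' k, halfMajorant k ^ α := by rw [near.tsum_add far, tsum_far, two_mul]
    _ ≤ 2 * (2 * α + 1) / (α - 1) := by
        rw [mul_div_assoc]
        gcongr
        exact tsum_halfMajorant_rpow_le hα

lemma summable_convRatio_rpow_and_tsum_le (hα : 1 < α) (n : ℤ) :
    Summable (fun k => convRatio n k ^ α) ∧
      ∑' k, convRatio n k ^ α ≤ 2 * (2 * α + 1) / (α - 1) := by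
  rcases le_total 0 n with hn | hn
  · exact summable_convRatio_rpow_and_tsum_le_of_nonneg hα hn
  · have reflected := summable_convRatio_rpow_and_tsum_le_of_nonneg hα (neg_nonneg.2 hn)
    rw [← (Equiv.neg ℤ).summable_iff, ← (Equiv.neg ℤ).tsum_eq] at reflected
    simpa only [Function.comp_def, Equiv.neg_apply, convRatio_neg_neg] using reflected

end ConvRatioSum

lemma div_rpow_mul_div_rpow_eq_convRatio (α β₁ β₂ : ℝ) (n k : ℤ) :
    β₁ / (|(k : ℝ)| + 1) ^ α * (β₂ / (|((n - k : ℤ) : ℝ)| + 1) ^ α)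
      = β₁ * β₂ / (|(n : ℝ)| + 1) ^ α * convRatio n k ^ α := by
  rw [convRatio, Real.div_rpow (by positivity) (by positivity),
    Real.mul_rpow (by positivity) (by positivity)]
  field_simp

theorem convolution_estimate_general {R : Type*} [NonUnitalSeminormedRing R] {α β₁ β₂ : ℝ}
    (hα : 1 < α) {x y : ℤ → R}
    (hx : ∀ n : ℤ, ‖x n‖ ≤ β₁ / (|(n : ℝ)| + 1) ^ α)
    (hy : ∀ n : ℤ, ‖y n‖ ≤ β₂ / (|(n : ℝ)| + 1) ^ α) (n : ℤ) :
    Summable (fun k : ℤ => ‖x k * y (n - k)‖) ∧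
      ∑' k : ℤ, ‖x k * y (n - k)‖
        ≤ (2 * (2 * α + 1) / (α - 1)) * (β₁ * β₂) / (|(n : ℝ)| + 1) ^ α := by
  have hβ₁ : 0 ≤ β₁ := (norm_nonneg (x 0)).trans (by simpa using hx 0)
  have hβ₂ : 0 ≤ β₂ := (norm_nonneg (y 0)).trans (by simpa using hy 0)
  obtain ⟨summable_ratio, tsum_ratio_le⟩ := summable_convRatio_rpow_and_tsum_le hα n
  set B := β₁ * β₂ / (|(n : ℝ)| + 1) ^ α with hB
  have term_le (k : ℤ) : ‖x k * y (n - k)‖ ≤ B * convRatio n k ^ α :=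
    calc ‖x k * y (n - k)‖ ≤ ‖x k‖ * ‖y (n - k)‖ := norm_mul_le _ _
      _ ≤ β₁ / (|(k : ℝ)| + 1) ^ α * (β₂ / (|((n - k : ℤ) : ℝ)| + 1) ^ α) := by
        gcongr
        exacts [hx k, hy (n - k)]
      _ = B * convRatio n k ^ α := div_rpow_mul_div_rpow_eq_convRatio α β₁ β₂ n k
  have summable_terms : Summable fun k => ‖x k * y (n - k)‖ :=
    (summable_ratio.mul_left B).of_nonneg_of_le (fun _ => norm_nonneg _) term_le
  refine ⟨summable_terms, ?_⟩
  calc ∑' k, ‖x k * y (n - k)‖ ≤ ∑' k, B * convRatio n k ^ α :=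
        summable_terms.tsum_le_tsum term_le (summable_ratio.mul_left B)
    _ = B * ∑' k, convRatio n k ^ α := tsum_mul_left
    _ ≤ B * (2 * (2 * α + 1) / (α - 1)) := by gcongr
    _ = (2 * (2 * α + 1) / (α - 1)) * (β₁ * β₂) / (|(n : ℝ)| + 1) ^ α := by rw [hB]; ring

/-- Lemma `lem:szac`: if `|x_n| ≤ β₁/(|n|+1)^α` and `|y_n| ≤ β₂/(|n|+1)^α`
with `α ≥ 2`, then the convolution series converges absolutely and
`|(x*y)_n| ≤ C β₁ β₂ /(|n|+1)^α` with `C = 2(2α+1)/(α-1)`. -/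
theorem convolution_estimate (α β₁ β₂ : ℝ) (hα : 2 ≤ α) (hβ₁ : 0 < β₁) (hβ₂ : 0 < β₂)
    (x y : ℤ → ℂ)
    (hx : ∀ n : ℤ, ‖x n‖ ≤ β₁ / (|(n : ℝ)| + 1) ^ α)
    (hy : ∀ n : ℤ, ‖y n‖ ≤ β₂ / (|(n : ℝ)| + 1) ^ α) :
    ∀ n : ℤ, Summable (fun k : ℤ => ‖x k * y (n - k)‖) ∧
      ‖conv x y n‖ ≤ (2 * (2 * α + 1) / (α - 1)) * (β₁ * β₂) / (|(n : ℝ)| + 1) ^ α := fun n =>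
  have estimate := convolution_estimate_general (one_lt_two.trans_le hα) hx hy n
  ⟨estimate.1, (norm_tsum_le_tsum_norm estimate.1).trans estimate.2⟩
end

section
/- Let β₁, β₂ > 0 and let x ∈ X_{β₁}, y ∈ X_{β₂}. Then for every n ∈ ℤ the convolution (x*y)_n is well defined, satisfies (x*y)_{-n} = conj((x*y)_n), and |(x*y)_n| ≤ 10·β₁β₂/(|n|+1)²; that is, x*y ∈ X_{10β₁β₂}. -/
open scoped Real
open Complex Filter

/-!
Put `w k = (|k| + 1)⁻²`. One of `k`, `n - k` is comparable in size to `n`, and convexity of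
`t ↦ t ^ 2` makes this quantitative: `w k * w (n - k) ≤ 2 * w n * (w k + w (n - k))`. Summing over
`k` bounds the convolution of `w` with itself by `4 * (∑ w) * w`, and
`∑ w = 2 * ζ(2) - 1 = π ^ 2 / 3 - 1 ≤ 5 / 2` gives the constant `10`. The symmetry is the
substitution `k ↦ -k`.
-/

section WeightedConvolution

variable {G A : Type*} [AddCommGroup G] {w : G → ℝ} {C a b : ℝ} {x y : G → A}

theorem hasSum_add_comp_sub_left (hw : Summable w) (n : G) :
    HasSum (fun k => w k + w (n - k)) (2 * ∑' k, w k) := by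
  have hreflect : HasSum (fun k => w (n - k)) (∑' k, w k) :=
    (Equiv.subLeft n).hasSum_iff.mpr hw.hasSum
  simpa only [two_mul] using hw.hasSum.add hreflect

section Norm

variable [NonUnitalSeminormedRing A]

theorem norm_mul_sub_le_of_weight (hC : ∀ k l, w k * w l ≤ C * w (k + l) * (w k + w l))
    (ha : 0 ≤ a) (hb : 0 ≤ b) (hx : ∀ k, ‖x k‖ ≤ a * w k) (hy : ∀ k, ‖y k‖ ≤ b * w k) (n k : G) :
    ‖x k * y (n - k)‖ ≤ a * b * (C * w n) * (w k + w (n - k)) := by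
  have hweights : w k * w (n - k) ≤ C * w n * (w k + w (n - k)) := by
    simpa only [add_sub_cancel] using hC k (n - k)
  calc ‖x k * y (n - k)‖ ≤ ‖x k‖ * ‖y (n - k)‖ := norm_mul_le _ _
    _ ≤ (a * w k) * (b * w (n - k)) :=
      mul_le_mul (hx k) (hy _) (norm_nonneg _) ((norm_nonneg _).trans (hx k))
    _ = a * b * (w k * w (n - k)) := mul_mul_mul_comm _ _ _ _
    _ ≤ a * b * (C * w n * (w k + w (n - k))) := by gcongr
    _ = a * b * (C * w n) * (w k + w (n - k)) := (mul_assoc _ _ _).symm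

theorem summable_norm_mul_sub_of_weight (hw : Summable w)
    (hC : ∀ k l, w k * w l ≤ C * w (k + l) * (w k + w l)) (ha : 0 ≤ a) (hb : 0 ≤ b)
    (hx : ∀ k, ‖x k‖ ≤ a * w k) (hy : ∀ k, ‖y k‖ ≤ b * w k) (n : G) :
    Summable fun k => ‖x k * y (n - k)‖ :=
  .of_nonneg_of_le (fun _ => norm_nonneg _) (norm_mul_sub_le_of_weight hC ha hb hx hy n)
    ((hasSum_add_comp_sub_left hw n).summable.mul_left _)

theorem norm_tsum_mul_sub_le_of_weight (hw : Summable w)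
    (hC : ∀ k l, w k * w l ≤ C * w (k + l) * (w k + w l)) (ha : 0 ≤ a) (hb : 0 ≤ b)
    (hx : ∀ k, ‖x k‖ ≤ a * w k) (hy : ∀ k, ‖y k‖ ≤ b * w k) (n : G) :
    ‖∑' k, x k * y (n - k)‖ ≤ a * b * (C * w n) * (2 * ∑' k, w k) :=
  tsum_of_norm_bounded ((hasSum_add_comp_sub_left hw n).mul_left _)
    (norm_mul_sub_le_of_weight hC ha hb hx hy n)

end Norm

theorem tsum_mul_neg_sub_eq_star [NonUnitalCommSemiring A] [StarRing A] [TopologicalSpace A]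
    [T2Space A] [ContinuousStar A] (hx : ∀ n, x (-n) = star (x n)) (hy : ∀ n, y (-n) = star (y n))
    (n : G) : ∑' k, x k * y (-n - k) = star (∑' k, x k * y (n - k)) := by
  rw [tsum_star, ← (Equiv.neg G).tsum_eq]
  refine tsum_congr fun k => ?_
  rw [Equiv.neg_apply, ← neg_sub' n k, hx, hy, star_mul']

end WeightedConvolution

/-- The weight `(‖g‖ + 1)⁻ᵖ` measuring polynomial decay of order `p`; for `G = ℤ` and `p = 2` it is
the weight in the definition of `X_β`. -/
noncomputable def decayWeight {G : Type*} [Norm G] (p : ℕ) (g : G) : ℝ := 1 / (‖g‖ + 1) ^ p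

section DecayWeight

variable {G : Type*} [SeminormedAddCommGroup G]

theorem decayWeight_nonneg (p : ℕ) (g : G) : 0 ≤ decayWeight p g := by
  unfold decayWeight
  positivity

theorem norm_add_add_one_pow_le (p : ℕ) (g h : G) :
    (‖g + h‖ + 1) ^ p ≤ 2 ^ (p - 1) * ((‖g‖ + 1) ^ p + (‖h‖ + 1) ^ p) :=
  calc (‖g + h‖ + 1) ^ p ≤ ((‖g‖ + 1) + (‖h‖ + 1)) ^ p := by
        gcongr ?_ ^ p
        linarith [norm_add_le g h]
    _ ≤ _ := add_pow_le (by positivity) (by positivity) p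

theorem decayWeight_mul_le (p : ℕ) (g h : G) :
    decayWeight p g * decayWeight p h ≤
      2 ^ (p - 1) * decayWeight p (g + h) * (decayWeight p g + decayWeight p h) := by
  have hpow := norm_add_add_one_pow_le p g h
  unfold decayWeight
  calc 1 / (‖g‖ + 1) ^ p * (1 / (‖h‖ + 1) ^ p)
      = (‖g + h‖ + 1) ^ p / ((‖g + h‖ + 1) ^ p * ((‖g‖ + 1) ^ p * (‖h‖ + 1) ^ p)) := by
        field_simp
    _ ≤ 2 ^ (p - 1) * ((‖g‖ + 1) ^ p + (‖h‖ + 1) ^ p) /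
          ((‖g + h‖ + 1) ^ p * ((‖g‖ + 1) ^ p * (‖h‖ + 1) ^ p)) := by gcongr
    _ = 2 ^ (p - 1) * (1 / (‖g + h‖ + 1) ^ p) * (1 / (‖g‖ + 1) ^ p + 1 / (‖h‖ + 1) ^ p) := by
        field_simp
        ring

end DecayWeight

theorem hasSum_decayWeight_two_int : HasSum (decayWeight 2 : ℤ → ℝ) (π ^ 2 / 3 - 1) := by
  have hnonneg : HasSum (fun n : ℕ => 1 / ((n : ℝ) + 1) ^ 2) (π ^ 2 / 6) := by
    simpa using (hasSum_nat_add_iff' 1).mpr hasSum_zeta_two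
  have hneg : HasSum (fun n : ℕ => 1 / ((n : ℝ) + 1 + 1) ^ 2) (π ^ 2 / 6 - 1) := by
    simpa using (hasSum_nat_add_iff' 1).mpr hnonneg
  have hnorm (n : ℕ) : ‖-((n : ℤ) + 1)‖ = (n : ℝ) + 1 := by
    rw [norm_neg]
    exact_mod_cast Int.norm_natCast (n + 1)
  have hsplit : π ^ 2 / 3 - 1 = π ^ 2 / 6 + (π ^ 2 / 6 - 1) := by ring
  rw [hsplit]
  refine HasSum.of_nat_of_neg_add_one ?_ ?_
  · simpa only [decayWeight, Int.norm_natCast] using hnonneg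
  · simpa only [decayWeight, hnorm] using hneg

theorem tsum_decayWeight_two_int_le : ∑' k : ℤ, decayWeight 2 k ≤ 5 / 2 := by
  rw [hasSum_decayWeight_two_int.tsum_eq]
  nlinarith [Real.pi_lt_d2, Real.pi_pos]

theorem conv_mem_X_general {G A : Type*} [SeminormedAddCommGroup G] [NormedCommRing A]
    [CompleteSpace A] [StarRing A] [ContinuousStar A] {p : ℕ} {S β₁ β₂ : ℝ}
    (hw : Summable (decayWeight p : G → ℝ)) (hS : ∑' k : G, decayWeight p k ≤ S)
    (hβ₁ : 0 ≤ β₁) (hβ₂ : 0 ≤ β₂) {x y : G → A}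
    (hx : ∀ n, ‖x n‖ ≤ β₁ / (‖n‖ + 1) ^ p) (hx_symm : ∀ n, x (-n) = star (x n))
    (hy : ∀ n, ‖y n‖ ≤ β₂ / (‖n‖ + 1) ^ p) (hy_symm : ∀ n, y (-n) = star (y n)) :
    (∀ n, Summable fun k => ‖x k * y (n - k)‖) ∧
      (∀ n, ‖∑' k, x k * y (n - k)‖ ≤ 2 * 2 ^ (p - 1) * S * (β₁ * β₂) / (‖n‖ + 1) ^ p) ∧
      ∀ n, ∑' k, x k * y (-n - k) = star (∑' k, x k * y (n - k)) := by
  have hxw (n : G) : ‖x n‖ ≤ β₁ * decayWeight p n := (hx n).trans_eq (mul_one_div _ _).symm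
  have hyw (n : G) : ‖y n‖ ≤ β₂ * decayWeight p n := (hy n).trans_eq (mul_one_div _ _).symm
  refine ⟨summable_norm_mul_sub_of_weight hw (decayWeight_mul_le p) hβ₁ hβ₂ hxw hyw, fun n => ?_,
    tsum_mul_neg_sub_eq_star hx_symm hy_symm⟩
  calc ‖∑' k, x k * y (n - k)‖
      ≤ β₁ * β₂ * (2 ^ (p - 1) * decayWeight p n) * (2 * ∑' k : G, decayWeight p k) :=
        norm_tsum_mul_sub_le_of_weight hw (decayWeight_mul_le p) hβ₁ hβ₂ hxw hyw n
    _ ≤ β₁ * β₂ * (2 ^ (p - 1) * decayWeight p n) * (2 * S) := by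
        have := decayWeight_nonneg p n
        gcongr
    _ = 2 * 2 ^ (p - 1) * S * (β₁ * β₂) / (‖n‖ + 1) ^ p := by
        rw [decayWeight]
        ring

/-- for `x ∈ X_{β₁}`, `y ∈ X_{β₂}` the convolution is well defined,
has the conjugation symmetry, and `x*y ∈ X_{10 β₁ β₂}`. -/
theorem conv_mem_X (β₁ β₂ : ℝ) (hβ₁ : 0 < β₁) (hβ₂ : 0 < β₂)
    (x y : ℤ → ℂ) (hx : memX β₁ x) (hy : memX β₂ y) :
    (∀ n : ℤ, Summable (fun k : ℤ => ‖x k * y (n - k)‖)) ∧ memX (10 * (β₁ * β₂)) (conv x y) := by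
  have hconstant : (10 : ℝ) = 2 * 2 ^ (2 - 1) * (5 / 2) := by norm_num
  rw [hconstant]
  exact conv_mem_X_general hasSum_decayWeight_two_int.summable tsum_decayWeight_two_int_le
    hβ₁.le hβ₂.le hx.1 hx.2 hy.1 hy.2
end

section
/- Let β > 0, K > 0, τ > 0, and c ∈ X_β. Then for every n ∈ ℤ the series Σ_{k=0}^∞ ((-1)^k/(2k+1)!) (c^{*(2k+1)})_n e^{-inτ} converges absolutely, and moreover (K/τ)·Σ_{k=0}^∞ (1/(2k+1)!) |(c^{*(2k+1)})_n| ≤ (K/τ) · sinh(10β)/(10(|n|+1)²). -/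
open scoped Real
open Complex Filter

/-!
The weight `w n = (|n| + 1)⁻²` is summable and satisfies
`w k * w (n - k) ≤ 2 * w n * (w k + w (n - k))`, because `t ≤ u + v` gives `t² ≤ 2 (u² + v²)`.
Summing over `k` bounds the convolution of `w` with itself by `4 (π² / 3 - 1) w ≤ 10 w`, so each
further convolution with `c` costs a factor `10 β`: `|c^{*(m+1)}| ≤ 10^m β^(m+1) w`. Summed against
the coefficients of the sine series, these bounds add up to `w n * sinh (10 β) / 10`.
-/

/-- Weights `w` whose self-convolution is dominated by `C * w`. The space of sequences that are
`O(w)` is then closed under convolution. -/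
structure IsSubconvolutive {G : Type*} [Sub G] (C : ℝ) (w : G → ℝ) : Prop where
  summable_mul : ∀ n, Summable fun k => w k * w (n - k)
  tsum_mul_le : ∀ n, ∑' k, w k * w (n - k) ≤ C * w n

theorem IsSubconvolutive.of_mul_le {G : Type*} [AddGroup G] {A : ℝ} {w : G → ℝ}
    (w_nonneg : ∀ k, 0 ≤ w k) (w_summable : Summable w)
    (mul_le : ∀ n k, w k * w (n - k) ≤ A * w n * (w k + w (n - k))) :
    IsSubconvolutive (2 * A * ∑' k, w k) w := by
  have majorant_hasSum (n : G) : HasSum (fun k => A * w n * (w k + w (n - k)))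
      (A * w n * (∑' k, w k + ∑' k, w k)) :=
    (w_summable.hasSum.add ((Equiv.subLeft n).hasSum_iff.mpr w_summable.hasSum)).mul_left _
  have summable_mul (n : G) : Summable fun k => w k * w (n - k) :=
    .of_nonneg_of_le (fun k => mul_nonneg (w_nonneg k) (w_nonneg _)) (mul_le n)
      (majorant_hasSum n).summable
  refine ⟨summable_mul, fun n => ?_⟩
  calc ∑' k, w k * w (n - k)
      ≤ A * w n * (∑' k, w k + ∑' k, w k) :=
        hasSum_le (mul_le n) (summable_mul n).hasSum (majorant_hasSum n)
    _ = 2 * A * (∑' k, w k) * w n := by ring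

theorem IsSubconvolutive.mono {G : Type*} [Sub G] {C D : ℝ} {w : G → ℝ}
    (hw : IsSubconvolutive C w) (w_nonneg : ∀ n, 0 ≤ w n) (hCD : C ≤ D) :
    IsSubconvolutive D w where
  summable_mul := hw.summable_mul
  tsum_mul_le n := (hw.tsum_mul_le n).trans (mul_le_mul_of_nonneg_right hCD (w_nonneg n))

section PolynomialDecay

variable {E : Type*} [SeminormedAddCommGroup E]

/-- The weight of polynomial decay of order `p`; the sequences of `X_β` are those bounded by
`β * polyDecay 2` (and symmetric). -/
noncomputable def polyDecay (p : ℕ) (x : E) : ℝ := ((‖x‖ + 1) ^ p)⁻¹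

theorem polyDecay_nonneg (p : ℕ) (x : E) : 0 ≤ polyDecay p x := by
  unfold polyDecay
  positivity

theorem polyDecay_mul_polyDecay_le (p : ℕ) (x y : E) :
    polyDecay p x * polyDecay p y ≤
      2 ^ (p - 1) * polyDecay p (x + y) * (polyDecay p x + polyDecay p y) := by
  have pow_le : (‖x + y‖ + 1) ^ p ≤ 2 ^ (p - 1) * ((‖x‖ + 1) ^ p + (‖y‖ + 1) ^ p) :=
    calc (‖x + y‖ + 1) ^ p
        ≤ ((‖x‖ + 1) + (‖y‖ + 1)) ^ p := by
          gcongr ?_ ^ p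
          linarith [norm_add_le x y]
      _ ≤ 2 ^ (p - 1) * ((‖x‖ + 1) ^ p + (‖y‖ + 1) ^ p) :=
          add_pow_le (by positivity) (by positivity) p
  unfold polyDecay
  calc ((‖x‖ + 1) ^ p)⁻¹ * ((‖y‖ + 1) ^ p)⁻¹
      = (‖x + y‖ + 1) ^ p *
          (((‖x + y‖ + 1) ^ p)⁻¹ * ((‖x‖ + 1) ^ p)⁻¹ * ((‖y‖ + 1) ^ p)⁻¹) := by
        field_simp
    _ ≤ 2 ^ (p - 1) * ((‖x‖ + 1) ^ p + (‖y‖ + 1) ^ p) *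
          (((‖x + y‖ + 1) ^ p)⁻¹ * ((‖x‖ + 1) ^ p)⁻¹ * ((‖y‖ + 1) ^ p)⁻¹) := by
        gcongr
    _ = 2 ^ (p - 1) * ((‖x + y‖ + 1) ^ p)⁻¹ *
          (((‖x‖ + 1) ^ p)⁻¹ + ((‖y‖ + 1) ^ p)⁻¹) := by
        field_simp
        ring

theorem isSubconvolutive_polyDecay {p : ℕ} (hp : Summable (polyDecay p : E → ℝ)) :
    IsSubconvolutive (2 * 2 ^ (p - 1) * ∑' x : E, polyDecay p x) (polyDecay p : E → ℝ) :=
  .of_mul_le (polyDecay_nonneg p) hp fun n k => by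
    simpa only [add_sub_cancel] using polyDecay_mul_polyDecay_le p k (n - k)

end PolynomialDecay

theorem hasSum_polyDecay_two : HasSum (polyDecay 2 : ℤ → ℝ) (π ^ 2 / 3 - 1) := by
  have nat_hasSum : HasSum (fun n : ℕ => (((n : ℝ) + 1) ^ 2)⁻¹) (π ^ 2 / 6) := by
    simpa using (hasSum_nat_add_iff' 1).mpr hasSum_zeta_two
  have int_hasSum : HasSum (polyDecay 2 : ℤ → ℝ) (π ^ 2 / 6 + π ^ 2 / 6 - polyDecay 2 (0 : ℤ)) :=
    .of_nat_of_neg (by simpa [polyDecay] using nat_hasSum) (by simpa [polyDecay] using nat_hasSum)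
  convert int_hasSum using 1
  norm_num [polyDecay]
  ring

theorem isSubconvolutive_polyDecay_two : IsSubconvolutive 10 (polyDecay 2 : ℤ → ℝ) := by
  refine (isSubconvolutive_polyDecay hasSum_polyDecay_two.summable).mono (polyDecay_nonneg 2) ?_
  rw [hasSum_polyDecay_two.tsum_eq]
  nlinarith [Real.pi_lt_d2, Real.pi_pos]

section Convolution

variable {w : ℤ → ℝ} {C : ℝ}

theorem norm_conv_le (hw : IsSubconvolutive C w) {a b : ℝ} (ha : 0 ≤ a) (hb : 0 ≤ b)
    {x y : ℤ → ℂ} (hx : ∀ n, ‖x n‖ ≤ a * w n) (hy : ∀ n, ‖y n‖ ≤ b * w n) (n : ℤ) :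
    ‖conv x y n‖ ≤ a * b * C * w n := by
  have term_le (k : ℤ) : ‖x k * y (n - k)‖ ≤ a * b * (w k * w (n - k)) :=
    calc ‖x k * y (n - k)‖ = ‖x k‖ * ‖y (n - k)‖ := norm_mul _ _
      _ ≤ (a * w k) * (b * w (n - k)) :=
        mul_le_mul (hx k) (hy _) (norm_nonneg _) ((norm_nonneg _).trans (hx k))
      _ = a * b * (w k * w (n - k)) := by ring
  calc ‖conv x y n‖
      ≤ a * b * ∑' k, w k * w (n - k) :=
        tsum_of_norm_bounded ((hw.summable_mul n).hasSum.mul_left _) term_le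
    _ ≤ a * b * (C * w n) := by
        gcongr
        exact hw.tsum_mul_le n
    _ = a * b * C * w n := by ring

theorem convPow_one (x : ℤ → ℂ) : convPow x 1 = x := by
  funext n
  simp [convPow, conv]

variable {β : ℝ} {c : ℤ → ℂ}

theorem norm_convPow_succ_le (hw : IsSubconvolutive C w) (hC : 0 ≤ C) (hβ : 0 ≤ β)
    (hc : ∀ n, ‖c n‖ ≤ β * w n) (m : ℕ) (n : ℤ) :
    ‖convPow c (m + 1) n‖ ≤ C ^ m * β ^ (m + 1) * w n := by
  induction m generalizing n with
  | zero => simpa [convPow_one] using hc n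
  | succ m ih =>
    calc ‖convPow c (m + 1 + 1) n‖
        ≤ C ^ m * β ^ (m + 1) * β * C * w n := norm_conv_le hw (by positivity) hβ ih hc n
      _ = C ^ (m + 1) * β ^ (m + 1 + 1) * w n := by ring

theorem norm_convPow_odd_div_factorial_le (hw : IsSubconvolutive C w) (hC : 0 < C) (hβ : 0 ≤ β)
    (hc : ∀ n, ‖c n‖ ≤ β * w n) (n : ℤ) (k : ℕ) :
    1 / (Nat.factorial (2 * k + 1) : ℝ) * ‖convPow c (2 * k + 1) n‖ ≤
      w n / C * ((C * β) ^ (2 * k + 1) / Nat.factorial (2 * k + 1)) :=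
  calc 1 / (Nat.factorial (2 * k + 1) : ℝ) * ‖convPow c (2 * k + 1) n‖
      ≤ 1 / (Nat.factorial (2 * k + 1) : ℝ) * (C ^ (2 * k) * β ^ (2 * k + 1) * w n) := by
        gcongr
        exact norm_convPow_succ_le hw hC.le hβ hc (2 * k) n
    _ = w n / C * ((C * β) ^ (2 * k + 1) / Nat.factorial (2 * k + 1)) := by
        field_simp
        ring

theorem summable_norm_convPow_odd_div_factorial (hw : IsSubconvolutive C w) (hC : 0 < C)
    (hβ : 0 ≤ β) (hc : ∀ n, ‖c n‖ ≤ β * w n) (n : ℤ) :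
    Summable fun k : ℕ => 1 / (Nat.factorial (2 * k + 1) : ℝ) * ‖convPow c (2 * k + 1) n‖ :=
  .of_nonneg_of_le (fun _ => by positivity) (norm_convPow_odd_div_factorial_le hw hC hβ hc n)
    ((Real.hasSum_sinh (C * β)).mul_left _).summable

theorem tsum_norm_convPow_odd_div_factorial_le (hw : IsSubconvolutive C w) (hC : 0 < C)
    (hβ : 0 ≤ β) (hc : ∀ n, ‖c n‖ ≤ β * w n) (n : ℤ) :
    ∑' k : ℕ, 1 / (Nat.factorial (2 * k + 1) : ℝ) * ‖convPow c (2 * k + 1) n‖ ≤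
      w n / C * Real.sinh (C * β) :=
  hasSum_le (norm_convPow_odd_div_factorial_le hw hC hβ hc n)
    (summable_norm_convPow_odd_div_factorial hw hC hβ hc n).hasSum
    ((Real.hasSum_sinh (C * β)).mul_left _)

end Convolution

theorem norm_sine_series_term (z : ℂ) (n : ℤ) (τ : ℝ) (k : ℕ) :
    ‖((-1) ^ k / (Nat.factorial (2 * k + 1) : ℂ)) * z * Complex.exp (-(Complex.I * n * τ))‖ =
      1 / (Nat.factorial (2 * k + 1) : ℝ) * ‖z‖ := by
  have norm_exp_eq_one : ‖Complex.exp (-(Complex.I * n * τ))‖ = 1 := by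
    simp [Complex.norm_exp]
  simp [norm_exp_eq_one]

theorem sine_series_estimate_general (β K τ : ℝ) (hK : 0 ≤ K) (hτ : 0 < τ)
    (c : ℤ → ℂ) (hc : ∀ n : ℤ, ‖c n‖ ≤ β / (|(n : ℝ)| + 1) ^ 2) :
    ∀ n : ℤ,
      Summable (fun k : ℕ =>
        ‖((-1) ^ k / (Nat.factorial (2 * k + 1) : ℂ)) * convPow c (2 * k + 1) n *
          Complex.exp (-(Complex.I * n * τ))‖) ∧
      (K / τ) * ∑' k : ℕ, (1 / (Nat.factorial (2 * k + 1) : ℝ)) * ‖convPow c (2 * k + 1) n‖ ≤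
        (K / τ) * Real.sinh (10 * β) / (10 * (|(n : ℝ)| + 1) ^ 2) := by
  intro n
  have hβ : 0 ≤ β := (norm_nonneg (c 0)).trans (by simpa using hc 0)
  have c_le (m : ℤ) : ‖c m‖ ≤ β * polyDecay 2 m := hc m
  have hw := isSubconvolutive_polyDecay_two
  constructor
  · simpa only [norm_sine_series_term] using
      summable_norm_convPow_odd_div_factorial hw (by norm_num) hβ c_le n
  · calc (K / τ) * ∑' k : ℕ, (1 / (Nat.factorial (2 * k + 1) : ℝ)) * ‖convPow c (2 * k + 1) n‖
        ≤ (K / τ) * (polyDecay 2 n / 10 * Real.sinh (10 * β)) := by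
          gcongr
          exact tsum_norm_convPow_odd_div_factorial_le hw (by norm_num) hβ c_le n
      _ = (K / τ) * Real.sinh (10 * β) / (10 * (|(n : ℝ)| + 1) ^ 2) := by
          rw [polyDecay, Int.norm_eq_abs]
          field_simp

/-- absolute convergence of the sine series on Fourier coefficients and the
estimate `(K/τ) Σ (1/(2k+1)!) |(c^{*(2k+1)})_n| ≤ (K/τ) sinh(10β)/(10(|n|+1)²)`. -/
theorem sine_series_estimate (β K τ : ℝ) (hβ : 0 < β) (hK : 0 < K) (hτ : 0 < τ)
    (c : ℤ → ℂ) (hc : memX β c) :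
    ∀ n : ℤ,
      Summable (fun k : ℕ =>
        ‖((-1) ^ k / (Nat.factorial (2 * k + 1) : ℂ)) * convPow c (2 * k + 1) n *
          Complex.exp (-(Complex.I * n * τ))‖) ∧
      (K / τ) * ∑' k : ℕ, (1 / (Nat.factorial (2 * k + 1) : ℝ)) * ‖convPow c (2 * k + 1) n‖ ≤
        (K / τ) * Real.sinh (10 * β) / (10 * (|(n : ℝ)| + 1) ^ 2) :=
  sine_series_estimate_general β K τ hK.le hτ c hc.1
end

section
/- Let K > 0, τ > 0, and let x : ℝ → ℝ be a 2π-periodic C¹ function whose sequence of Fourier coefficients c (i.e. c_n = (1/2π)∫₀^{2π} x(t) e^{-int} dt) belongs to X. If x satisfies x'(t) = -(K/τ)·sin(x(t-τ)) for all t ∈ ℝ, then for every n ∈ ℤ: i n c_n = -(K/τ) Σ_{k=0}^∞ ((-1)^k/(2k+1)!) (c^{*(2k+1)})_n e^{-inτ}. -/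
open scoped Real
open Complex Filter

/-!
View the solution as a function `f` on the circle `ℝ / Tℤ`. Since `f` is continuous, its powers are
square integrable, and Parseval's identity for `f ^ m` and a character times `conj f` shows that the
Fourier coefficients of `f ^ (m + 1)` are the convolution of those of `f ^ m` and of `f`. The power
series of an entire function `g`, evaluated at `f`, converges in the Banach algebra of continuous
functions, so its Fourier coefficients can be computed term by term. Finally, differentiation and
translation by `τ` act on the `n`-th Fourier coefficient as multiplication by `2πin / T` and by
`exp (-2πinτ / T)`.
-/

open AddCircle MeasureTheory
open scoped ComplexConjugate

section Circle

variable {T : ℝ} [Fact (0 < T)]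

lemma hasSum_conj_fourierCoeff_mul_fourierCoeff {f g : AddCircle T → ℂ}
    (hf : MemLp f 2 haarAddCircle) (hg : MemLp g 2 haarAddCircle) :
    HasSum (fun k ↦ conj (fourierCoeff f k) * fourierCoeff g k)
      (∫ t, conj (f t) * g t ∂haarAddCircle) := by
  have inner_toLp : inner ℂ (hf.toLp f) (hg.toLp g) = ∫ t, conj (f t) * g t ∂haarAddCircle := by
    rw [L2.inner_def]
    refine integral_congr_ae ?_
    filter_upwards [hf.coeFn_toLp, hg.coeFn_toLp] with t hft hgt
    rw [hft, hgt, RCLike.inner_apply']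
  have h := fourierBasis.hasSum_inner_mul_inner (hf.toLp f) (hg.toLp g)
  simpa only [← inner_conj_symm (𝕜 := ℂ) (hf.toLp f) (fourierBasis _),
    ← HilbertBasis.repr_apply_apply, fourierBasis_repr, fourierCoeff_congr_ae hf.coeFn_toLp,
    fourierCoeff_congr_ae hg.coeFn_toLp, inner_toLp] using h

lemma fourierCoeff_fourier_mul_conj (f : AddCircle T → ℂ) (m k : ℤ) :
    fourierCoeff (fun t ↦ fourier m t * conj (f t)) k = conj (fourierCoeff f (m - k)) := by
  simp_rw [fourierCoeff, ← integral_conj, smul_eq_mul, map_mul, ← fourier_neg, ← mul_assoc,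
    ← fourier_add]
  ring_nf

lemma hasSum_fourierCoeff_mul_fourierCoeff {f g : AddCircle T → ℂ}
    (hf : MemLp f 2 haarAddCircle) (hg : MemLp g 2 haarAddCircle) (n : ℤ) :
    HasSum (fun k ↦ fourierCoeff f k * fourierCoeff g (n - k))
      (fourierCoeff (fun t ↦ f t * g t) n) := by
  have memLp_fourier_mul_conj : MemLp (fun t ↦ fourier n t * conj (g t)) 2 haarAddCircle :=
    hg.of_le ((fourier n).continuous.aestronglyMeasurable.mul hg.star.1)
      (.of_forall fun t ↦ by
        rw [norm_mul, fourier_apply, Circle.norm_coe, one_mul, RCLike.norm_conj])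
  convert hasSum_conj_fourierCoeff_mul_fourierCoeff memLp_fourier_mul_conj hf using 1
  · ext k
    rw [fourierCoeff_fourier_mul_conj, RCLike.conj_conj, mul_comm]
  · simp_rw [fourierCoeff, fourier_neg, map_mul, RCLike.conj_conj, smul_eq_mul, mul_assoc,
      mul_comm (g _)]

lemma convPow_fourierCoeff {f : AddCircle T → ℂ} (hf : Continuous f) (m : ℕ) :
    convPow (fourierCoeff f) m = fourierCoeff (fun t ↦ f t ^ m) := by
  have memLp_pow (j : ℕ) : MemLp (fun t ↦ f t ^ j) 2 haarAddCircle :=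
    ContinuousMap.memLp _ ℂ ⟨_, hf.pow j⟩
  induction m with
  | zero =>
    have fourier_zero_eq : (fun t ↦ f t ^ 0) = fourier 0 := by ext t; simp
    ext n
    rw [fourier_zero_eq, fourierCoeff_fourier, Pi.single_apply, convPow]
  | succ m ih =>
    ext n
    have h := hasSum_fourierCoeff_mul_fourierCoeff (memLp_pow m) (by simpa using memLp_pow 1) n
    simpa only [convPow, conv, ih, pow_succ] using h.tsum_eq

lemma hasSum_fourierCoeff {ι : Type*} {F : ι → C(AddCircle T, ℂ)} {f : C(AddCircle T, ℂ)}
    (hF : HasSum F f) (n : ℤ) : HasSum (fun i ↦ fourierCoeff (F i) n) (fourierCoeff f n) := by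
  have h := (innerSL ℂ (fourierBasis n)).hasSum
    ((ContinuousMap.toLp (E := ℂ) 2 haarAddCircle ℂ).hasSum hF)
  simpa only [innerSL_apply_apply, ← HilbertBasis.repr_apply_apply, fourierBasis_repr,
    fourierCoeff_toLp] using h

variable {E : Type*} [NormedAddCommGroup E] [NormedSpace ℂ E]

lemma fourierCoeff_comp_sub (f : AddCircle T → E) (τ : AddCircle T) (n : ℤ) :
    fourierCoeff (fun t ↦ f (t - τ)) n = fourier (-n) τ • fourierCoeff f n := by
  have fourier_add_right (t : AddCircle T) :
      fourier (-n) (t + τ) = fourier (-n) τ * fourier (-n) t := by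
    simp only [fourier_apply, zsmul_add, toCircle_add, Circle.coe_mul, mul_comm]
  rw [fourierCoeff, ← integral_add_right_eq_self _ τ]
  simp_rw [fourier_add_right, add_sub_cancel_right, mul_smul, integral_smul, fourierCoeff]

lemma fourierCoeff_of_hasDerivAt [CompleteSpace E] {f f' : AddCircle T → E}
    (hderiv : ∀ t : ℝ, HasDerivAt (fun s : ℝ ↦ f s) (f' t) t)
    (hf' : IntervalIntegrable (fun t : ℝ ↦ f' t) volume 0 T) (n : ℤ) :
    fourierCoeff f' n = (2 * π * I * n / T : ℂ) • fourierCoeff f n := by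
  have hf : Continuous fun t : ℝ ↦ f t :=
    continuous_iff_continuousAt.2 fun t ↦ (hderiv t).continuousAt
  have he : Continuous fun t : ℝ ↦ fourier (-n) (t : AddCircle T) :=
    (fourier (-n)).continuous.comp (AddCircle.continuous_mk' T)
  have product_rule (t : ℝ) := (hasDerivAt_fourier_neg T n t).smul (hderiv t)
  have int_f : IntervalIntegrable (fun t : ℝ ↦ (-2 * π * I * n / T * fourier (-n) t : ℂ) • f t)
      volume 0 T := ((he.const_mul _).smul hf).intervalIntegrable 0 T
  have int_f' := hf'.continuousOn_smul he.continuousOn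
  have integral_deriv := intervalIntegral.integral_eq_sub_of_hasDerivAt (fun t _ ↦ product_rule t)
    (int_f'.add int_f)
  rw [intervalIntegral.integral_add int_f' int_f] at integral_deriv
  simp_rw [Pi.smul_apply', mul_smul, intervalIntegral.integral_smul, AddCircle.coe_period,
    QuotientAddGroup.mk_zero, sub_self] at integral_deriv
  rw [fourierCoeff_eq_intervalIntegral f' n 0, fourierCoeff_eq_intervalIntegral f n 0, zero_add,
    smul_comm, eq_neg_of_add_eq_zero_left integral_deriv, ← neg_smul]
  congr 2
  ring

end Circle

lemma exists_hasSum_smul_pow {X ι : Type*} [TopologicalSpace X] [CompactSpace X] {a : ι → ℂ}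
    {e : ι → ℕ} {g : ℂ → ℂ} (hg : ∀ z, HasSum (fun i ↦ a i * z ^ e i) (g z)) (f : C(X, ℂ)) :
    ∃ F : C(X, ℂ), HasSum (fun i ↦ a i • f ^ e i) F ∧ ∀ t, F t = g (f t) := by
  have summable_smul_pow : Summable fun i ↦ a i • f ^ e i := by
    refine .of_norm_bounded (hg ‖f‖).summable.norm fun i ↦ ?_
    refine (ContinuousMap.norm_le _ (norm_nonneg _)).2 fun t ↦ ?_
    simp only [ContinuousMap.smul_apply, ContinuousMap.pow_apply, smul_eq_mul, norm_mul, norm_pow,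
      norm_real, norm_norm]
    gcongr
    exact f.norm_coe_le_norm t
  exact ⟨_, summable_smul_pow.hasSum, fun t ↦
    (ContinuousMap.hasSum_apply summable_smul_pow.hasSum t).unique (hg (f t))⟩

lemma hasSum_const_mul_sin (κ z : ℂ) :
    HasSum (fun k : ℕ ↦ κ * ((-1) ^ k / (Nat.factorial (2 * k + 1) : ℂ)) * z ^ (2 * k + 1))
      (κ * sin z) := by
  simpa only [mul_assoc, div_mul_eq_mul_div] using (hasSum_sin z).mul_left κ

lemma fourier_neg_two_pi (n : ℤ) (t : ℝ) :
    fourier (-n) (t : AddCircle (2 * π)) = exp (-(I * n * t)) := by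
  rw [fourier_coe_apply]
  congr 1
  push_cast
  field_simp

lemma fourierCoeff_two_pi [Fact (0 < 2 * π)] (f : AddCircle (2 * π) → ℂ) (n : ℤ) :
    fourierCoeff f n =
      ((1 / (2 * π) : ℝ) : ℂ) * ∫ t in (0 : ℝ)..(2 * π), f t * exp (-(I * n * t)) := by
  simp_rw [fourierCoeff_eq_intervalIntegral f n 0, zero_add, fourier_neg_two_pi, smul_eq_mul,
    real_smul, mul_comm]

theorem solution_implies_fourier_equations_general {T : ℝ} [Fact (0 < T)] {ι : Type*}
    {a : ι → ℂ} {e : ι → ℕ} {g : ℂ → ℂ} (hg : ∀ z, HasSum (fun i ↦ a i * z ^ e i) (g z))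
    {f : AddCircle T → ℂ} {τ : AddCircle T}
    (hode : ∀ t : ℝ, HasDerivAt (fun s : ℝ ↦ f s) (g (f (t - τ))) t) (n : ℤ) :
    HasSum (fun i ↦ a i * convPow (fourierCoeff f) (e i) n * fourier (-n) τ)
      (2 * π * I * n / T * fourierCoeff f n) := by
  have hf : Continuous f := (QuotientAddGroup.isQuotientMap_mk _).continuous_iff.2 <|
    continuous_iff_continuousAt.2 fun t ↦ (hode t).continuousAt
  obtain ⟨F, hF, F_eq⟩ := exists_hasSum_smul_pow hg ⟨f, hf⟩
  have hderiv (t : ℝ) : HasDerivAt (fun s : ℝ ↦ f s) (F (t - τ)) t := F_eq _ ▸ hode t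
  have coeff_deriv : fourier (-n) τ * fourierCoeff F n = 2 * π * I * n / T * fourierCoeff f n := by
    rw [← smul_eq_mul, ← fourierCoeff_comp_sub]
    refine fourierCoeff_of_hasDerivAt hderiv (Continuous.intervalIntegrable ?_ 0 T) n
    exact F.continuous.comp ((AddCircle.continuous_mk' T).sub continuous_const)
  rw [← coeff_deriv, mul_comm]
  refine ((hasSum_fourierCoeff hF n).mul_right _).congr_fun fun i ↦ ?_
  rw [convPow_fourierCoeff hf, ← fourierCoeff.const_mul]
  rfl

lemma I_mul_fourierCoeff_of_hasDerivAt_sin [Fact (0 < 2 * π)] {f : AddCircle (2 * π) → ℂ} {κ : ℂ}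
    {τ : ℝ} (hode : ∀ t : ℝ, HasDerivAt (fun s : ℝ ↦ f s) (κ * sin (f (t - τ : ℝ))) t) (n : ℤ) :
    I * n * fourierCoeff f n =
      κ * ∑' k : ℕ, ((-1) ^ k / (Nat.factorial (2 * k + 1) : ℂ)) *
        convPow (fourierCoeff f) (2 * k + 1) n * exp (-(I * n * τ)) := by
  have frequency_eq : 2 * π * I * n / (2 * π : ℝ) = I * n := by
    push_cast
    field_simp
  have h := solution_implies_fourier_equations_general (hasSum_const_mul_sin κ) (f := f) (τ := τ)
    hode n
  rw [frequency_eq, fourier_neg_two_pi] at h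
  simpa only [mul_assoc, tsum_mul_left] using h.tsum_eq.symm

/-- Theorem `tw:fourier`, ⇒: if a `2π`-periodic `C¹` solution of
`x'(t) = -(K/τ) sin(x(t-τ))` has Fourier coefficients `c ∈ X`, then `c` satisfies the
equations `i n c_n = -(K/τ) Σ_k ((-1)^k/(2k+1)!) (c^{*(2k+1)})_n e^{-inτ}`. -/
theorem solution_implies_fourier_equations (K τ : ℝ) (hK : 0 < K) (hτ : 0 < τ)
    (x : ℝ → ℝ) (hx : ContDiff ℝ 1 x) (hper : Function.Periodic x (2 * π))
    (c : ℤ → ℂ)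
    (hcdef : ∀ n : ℤ, c n =
      ((1 / (2 * π) : ℝ) : ℂ) *
        ∫ t in (0 : ℝ)..(2 * π), (x t : ℂ) * Complex.exp (-(Complex.I * n * t)))
    (hcX : ∃ β > 0, memX β c)
    (hode : ∀ t : ℝ, deriv x t = -(K / τ) * Real.sin (x (t - τ))) :
    ∀ n : ℤ, Complex.I * n * c n =
      -((K / τ : ℝ) : ℂ) *
        ∑' k : ℕ, ((-1) ^ k / (Nat.factorial (2 * k + 1) : ℂ)) * convPow c (2 * k + 1) n *
          Complex.exp (-(Complex.I * n * τ)) := by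
  intro n
  have : Fact (0 < 2 * π) := ⟨Real.two_pi_pos⟩
  have hc : fourierCoeff (hper.comp ofReal).lift = c :=
    funext fun m ↦ (fourierCoeff_two_pi _ m).trans (hcdef m).symm
  have hode_ofReal (t : ℝ) : HasDerivAt (ofReal ∘ x) (-(K / τ : ℝ) * sin (x (t - τ))) t := by
    have h := (hx.differentiable one_ne_zero t).hasDerivAt.ofReal_comp
    rw [hode] at h
    exact_mod_cast h
  rw [← hc]
  exact I_mul_fourierCoeff_of_hasDerivAt_sin hode_ofReal n
end

section
/- Let K > 0, τ > 0, and let c ∈ X satisfy, for every n ∈ ℤ, the equation i n c_n = -(K/τ) Σ_{k=0}^∞ ((-1)^k/(2k+1)!) (c^{*(2k+1)})_n e^{-inτ}. Then the function x(t) := Σ_{n∈ℤ} c_n e^{int} is a well-defined real-valued 2π-periodic C¹ function and satisfies x'(t) = -(K/τ)·sin(x(t-τ)) for all t ∈ ℝ. -/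
open scoped Real
open Complex Filter

/-!
Absolutely summable sequences form an algebra under convolution, with
`‖x * y‖₁ ≤ ‖x‖₁ ‖y‖₁`, and `x ↦ ∑ xₙ e^{int}` is multiplicative on it. Summing the sine series
term by term, the sequence `∑ (-1)^k / (2k+1)! c^{*(2k+1)}` is thus absolutely summable and has
Fourier series `sin (x t)`; the factor `e^{-inτ}` shifts the time by `τ`. The equations therefore
make `n cₙ` absolutely summable, which justifies differentiating `x` term by term.
-/

theorem memX.summable {β : ℝ} {x : ℤ → ℂ} (hx : memX β x) : Summable x := by
  have hsq : Summable fun n : ℕ => β / ((n : ℝ) + 1) ^ 2 := by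
    have hshift := (summable_nat_add_iff 1).2 (Real.summable_one_div_nat_pow.2 one_lt_two)
    simpa [div_eq_mul_inv] using hshift.mul_left β
  refine Summable.of_norm_bounded (Summable.of_nat_of_neg ?_ ?_) hx.1 <;> simpa using hsq

section Convolution

variable {x y : ℤ → ℂ}

theorem summable_shear_mul (hx : Summable x) (hy : Summable y) :
    Summable fun p : ℤ × ℤ => x p.1 * y (p.2 - p.1) :=
  (Equiv.prodShear (Equiv.refl ℤ) Equiv.subRight).summable_iff.2
    (summable_mul_of_summable_norm hx.norm hy.norm)

theorem summable_conv (hx : Summable x) (hy : Summable y) : Summable (conv x y) :=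
  (summable_shear_mul hx hy).prod_symm.prod

theorem tsum_conv (hx : Summable x) (hy : Summable y) :
    ∑' n, conv x y n = (∑' n, x n) * ∑' n, y n := by
  calc ∑' n, conv x y n
      = ∑' k, ∑' n, x k * y (n - k) := (summable_shear_mul hx hy).tsum_comm
    _ = ∑' k, x k * ∑' n, y n := by
        refine tsum_congr fun k => ?_
        rw [tsum_mul_left]
        exact congrArg (x k * ·) ((Equiv.subRight k).tsum_eq y)
    _ = (∑' n, x n) * ∑' n, y n := tsum_mul_right

theorem tsum_norm_conv_le (hx : Summable x) (hy : Summable y) :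
    ∑' n, ‖conv x y n‖ ≤ (∑' n, ‖x n‖) * ∑' n, ‖y n‖ := by
  have hxy : Summable fun p : ℤ × ℤ => ‖x p.1 * y (p.2 - p.1)‖ := (summable_shear_mul hx hy).norm
  calc ∑' n, ‖conv x y n‖
      ≤ ∑' n, ∑' k, ‖x k * y (n - k)‖ :=
        (summable_conv hx hy).norm.tsum_le_tsum
          (fun n => norm_tsum_le_tsum_norm (hxy.prod_symm.prod_factor n)) hxy.prod_symm.prod
    _ = ∑' k, ∑' n, ‖x k * y (n - k)‖ := hxy.tsum_comm
    _ = ∑' k, ‖x k‖ * ∑' n, ‖y n‖ := by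
        refine tsum_congr fun k => ?_
        simp only [norm_mul]
        rw [tsum_mul_left]
        exact congrArg (‖x k‖ * ·) ((Equiv.subRight k).tsum_eq fun n => ‖y n‖)
    _ = (∑' n, ‖x n‖) * ∑' n, ‖y n‖ := tsum_mul_right

theorem conv_mul_addChar (x y : ℤ → ℂ) (e : AddChar ℤ ℂ) :
    conv (fun n => x n * e n) (fun n => y n * e n) = fun n => conv x y n * e n := by
  ext n
  rw [conv, conv, ← tsum_mul_right]
  refine tsum_congr fun k => ?_
  have he : e n = e k * e (n - k) := by rw [← e.map_add_eq_mul, add_sub_cancel]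
  rw [he]
  ring

end Convolution

section ConvolutionPowers

variable {x : ℤ → ℂ}

theorem convPow_zero_eq_single (x : ℤ → ℂ) : convPow x 0 = Pi.single 0 1 := by
  ext n
  simp only [convPow, Pi.single_apply]

theorem summable_convPow (hx : Summable x) (m : ℕ) : Summable (convPow x m) := by
  induction m with
  | zero =>
    rw [convPow_zero_eq_single]
    exact (hasSum_pi_single 0 1).summable
  | succ m ih => exact summable_conv ih hx

theorem tsum_convPow (hx : Summable x) (m : ℕ) : ∑' n, convPow x m n = (∑' n, x n) ^ m := by
  induction m with
  | zero => rw [convPow_zero_eq_single, tsum_pi_single, pow_zero]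
  | succ m ih => rw [convPow, tsum_conv (summable_convPow hx m) hx, ih, pow_succ]

theorem tsum_norm_convPow_le (hx : Summable x) (m : ℕ) :
    ∑' n, ‖convPow x m n‖ ≤ (∑' n, ‖x n‖) ^ m := by
  induction m with
  | zero => simp [convPow, apply_ite]
  | succ m ih =>
    calc ∑' n, ‖convPow x (m + 1) n‖
        ≤ (∑' n, ‖convPow x m n‖) * ∑' n, ‖x n‖ := tsum_norm_conv_le (summable_convPow hx m) hx
      _ ≤ (∑' n, ‖x n‖) ^ (m + 1) := by
          rw [pow_succ]
          gcongr

theorem convPow_mul_addChar (x : ℤ → ℂ) (e : AddChar ℤ ℂ) (m : ℕ) :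
    convPow (fun n => x n * e n) m = fun n => convPow x m n * e n := by
  induction m with
  | zero =>
    ext n
    by_cases hn : n = 0 <;> simp [convPow, hn]
  | succ m ih => rw [convPow, ih, conv_mul_addChar, convPow]

end ConvolutionPowers

section ConvolutionSeries

variable {ι : Type*} {a : ι → ℂ} {d : ι → ℕ} {x : ℤ → ℂ}

theorem summable_mul_convPow (hx : Summable x)
    (ha : Summable fun i => ‖a i‖ * (∑' n, ‖x n‖) ^ d i) :
    Summable fun p : ι × ℤ => a p.1 * convPow x (d p.1) p.2 := by
  refine Summable.of_norm ((summable_prod_of_nonneg fun _ => norm_nonneg _).2 ⟨fun i => ?_, ?_⟩)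
  · exact ((summable_convPow hx (d i)).mul_left (a i)).norm
  · refine Summable.of_nonneg_of_le (fun _ => tsum_nonneg fun _ => norm_nonneg _) (fun i => ?_) ha
    simp only [norm_mul, tsum_mul_left]
    gcongr
    exact tsum_norm_convPow_le hx (d i)

theorem summable_tsum_mul_convPow (hx : Summable x)
    (ha : Summable fun i => ‖a i‖ * (∑' n, ‖x n‖) ^ d i) :
    Summable fun n => ∑' i, a i * convPow x (d i) n :=
  (summable_mul_convPow hx ha).prod_symm.prod

theorem tsum_tsum_mul_convPow (hx : Summable x)
    (ha : Summable fun i => ‖a i‖ * (∑' n, ‖x n‖) ^ d i) :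
    ∑' n, ∑' i, a i * convPow x (d i) n = ∑' i, a i * (∑' n, x n) ^ d i := by
  calc ∑' n, ∑' i, a i * convPow x (d i) n
      = ∑' i, ∑' n, a i * convPow x (d i) n := (summable_mul_convPow hx ha).tsum_comm
    _ = ∑' i, a i * (∑' n, x n) ^ d i := by simp only [tsum_mul_left, tsum_convPow hx]

end ConvolutionSeries

section ConvolutionSine

/-- The sine of a sequence in the convolution algebra, `∑ₖ (-1)ᵏ / (2k+1)! x^{*(2k+1)}`: the
Fourier coefficients of the sine of a function with Fourier coefficients `x`. -/
noncomputable def convSin (x : ℤ → ℂ) (n : ℤ) : ℂ :=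
  ∑' k : ℕ, (-1) ^ k / (Nat.factorial (2 * k + 1) : ℂ) * convPow x (2 * k + 1) n

theorem summable_norm_sin_coeff_mul_pow (r : ℝ) :
    Summable fun k : ℕ => ‖(-1) ^ k / (Nat.factorial (2 * k + 1) : ℂ)‖ * r ^ (2 * k + 1) := by
  refine (Real.hasSum_sinh r).summable.congr fun k => ?_
  simp [div_eq_inv_mul]

variable {x : ℤ → ℂ}

theorem summable_convSin (hx : Summable x) : Summable (convSin x) :=
  summable_tsum_mul_convPow hx (summable_norm_sin_coeff_mul_pow _)

theorem tsum_convSin (hx : Summable x) : ∑' n, convSin x n = sin (∑' n, x n) := by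
  rw [sin_eq_tsum]
  refine (tsum_tsum_mul_convPow hx (summable_norm_sin_coeff_mul_pow _)).trans ?_
  exact tsum_congr fun k => by ring

theorem convSin_mul_addChar (x : ℤ → ℂ) (e : AddChar ℤ ℂ) :
    convSin (fun n => x n * e n) = fun n => convSin x n * e n := by
  ext n
  simp only [convSin, convPow_mul_addChar, ← mul_assoc, tsum_mul_right]

end ConvolutionSine

section FourierSeries

/-- The character `n ↦ e^{int}` of `ℤ`, through which evaluation of a Fourier series at `t`
becomes summation of a modulated sequence. -/
noncomputable def expAddChar (t : ℝ) : AddChar ℤ ℂ where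
  toFun n := exp (I * n * t)
  map_zero_eq_one' := by simp
  map_add_eq_mul' m n := by
    rw [← exp_add]
    push_cast
    ring_nf

/-- The function `t ↦ ∑ₙ cₙ e^{int}` with Fourier coefficients `c`; its value is `0` at points
where the series is not summable. -/
noncomputable def fourierSeries (c : ℤ → ℂ) (t : ℝ) : ℂ :=
  ∑' n : ℤ, c n * expAddChar t n

variable {c : ℤ → ℂ}

theorem expAddChar_apply (t : ℝ) (n : ℤ) : expAddChar t n = exp (I * n * t) := rfl

theorem norm_expAddChar (t : ℝ) (n : ℤ) : ‖expAddChar t n‖ = 1 := by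
  rw [expAddChar_apply, ← norm_exp_ofReal_mul_I (n * t)]
  push_cast
  ring_nf

theorem expAddChar_sub (t τ : ℝ) (n : ℤ) :
    expAddChar (t - τ) n = exp (-(I * n * τ)) * expAddChar t n := by
  rw [expAddChar_apply, expAddChar_apply, ← exp_add]
  push_cast
  ring_nf

theorem expAddChar_add_two_pi (t : ℝ) : expAddChar (t + 2 * π) = expAddChar t := by
  ext n
  rw [expAddChar_apply, expAddChar_apply, ← exp_periodic.int_mul n (I * n * t)]
  push_cast
  ring_nf

theorem conj_expAddChar (t : ℝ) (n : ℤ) :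
    starRingEnd ℂ (expAddChar t n) = expAddChar t (-n) := by
  simp [expAddChar_apply, ← exp_conj]

theorem hasDerivAt_expAddChar (n : ℤ) (t : ℝ) :
    HasDerivAt (fun s => expAddChar s n) (I * n * expAddChar t n) t :=
  (((hasDerivAt_id t).ofReal_comp.const_mul (I * n : ℂ)).cexp).congr_deriv (by
    simp [expAddChar_apply, mul_comm])

theorem summable_mul_expAddChar (hc : Summable c) (t : ℝ) :
    Summable fun n => c n * expAddChar t n :=
  Summable.of_norm (by simpa only [norm_mul, norm_expAddChar, mul_one] using hc.norm)

theorem fourierSeries_periodic (c : ℤ → ℂ) : Function.Periodic (fourierSeries c) (2 * π) :=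
  fun t => by rw [fourierSeries, expAddChar_add_two_pi, fourierSeries]

theorem fourierSeries_mul_exp_neg (c : ℤ → ℂ) (τ t : ℝ) :
    fourierSeries (fun n => c n * exp (-(I * n * τ))) t = fourierSeries c (t - τ) := by
  simp only [fourierSeries, expAddChar_sub, mul_assoc]

theorem fourierSeries_const_mul (a : ℂ) (c : ℤ → ℂ) (t : ℝ) :
    fourierSeries (fun n => a * c n) t = a * fourierSeries c t := by
  simp only [fourierSeries, mul_assoc, tsum_mul_left]

theorem ofReal_re_fourierSeries (hc : ∀ n, c (-n) = starRingEnd ℂ (c n)) (t : ℝ) :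
    ((fourierSeries c t).re : ℂ) = fourierSeries c t := by
  rw [← conj_eq_iff_re, fourierSeries, conj_tsum, ← (Equiv.neg ℤ).tsum_eq]
  refine tsum_congr fun n => ?_
  rw [Equiv.neg_apply, map_mul, hc, conj_conj, conj_expAddChar, neg_neg]

theorem hasDerivAt_fourierSeries (hc : Summable c) (hc' : Summable fun n : ℤ => I * n * c n)
    (t : ℝ) : HasDerivAt (fourierSeries c) (fourierSeries (fun n => I * n * c n) t) t := by
  refine hasDerivAt_tsum (g := fun n s => c n * expAddChar s n)
    (g' := fun n s => I * n * c n * expAddChar s n) hc'.norm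
    (fun n s => ?_) (fun n s => ?_) (summable_mul_expAddChar hc 0) t
  · exact ((hasDerivAt_expAddChar n s).const_mul (c n)).congr_deriv (by ring)
  · rw [norm_mul, norm_expAddChar, mul_one]

theorem fourierSeries_convSin (hc : Summable c) (t : ℝ) :
    fourierSeries (convSin c) t = sin (fourierSeries c t) := by
  rw [fourierSeries, fourierSeries, ← tsum_convSin (summable_mul_expAddChar hc t),
    convSin_mul_addChar]

end FourierSeries

theorem hasDerivAt_fourierSeries_of_delayed_convSin {a : ℂ} {τ : ℝ} {c : ℤ → ℂ} (hc : Summable c)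
    (heq : ∀ n : ℤ, I * n * c n = a * (convSin c n * exp (-(I * n * τ)))) (t : ℝ) :
    HasDerivAt (fourierSeries c) (a * sin (fourierSeries c (t - τ))) t := by
  have hshift : Summable fun n : ℤ => convSin c n * exp (-(I * n * τ)) := by
    simpa [expAddChar_apply] using summable_mul_expAddChar (summable_convSin hc) (-τ)
  have hc' : Summable fun n : ℤ => I * n * c n := by
    simpa only [heq] using hshift.mul_left a
  refine (hasDerivAt_fourierSeries hc hc' t).congr_deriv ?_
  simp only [heq]
  rw [fourierSeries_const_mul, fourierSeries_mul_exp_neg, fourierSeries_convSin hc]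

theorem contDiff_one_of_hasDerivAt_delayed {F g : ℝ → ℝ} {τ : ℝ} (hF : Continuous F)
    (hg : ∀ t, HasDerivAt g (F (g (t - τ))) t) : ContDiff ℝ 1 g := by
  have hdiff : Differentiable ℝ g := fun t => (hg t).differentiableAt
  have hderiv : deriv g = fun t => F (g (t - τ)) := funext fun t => (hg t).deriv
  rw [contDiff_one_iff_deriv, hderiv]
  exact ⟨hdiff, hF.comp (hdiff.continuous.comp (continuous_sub_right τ))⟩

theorem fourier_equations_imply_solution_general (a τ : ℝ) (c : ℤ → ℂ) (hc : Summable c)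
    (hsymm : ∀ n, c (-n) = starRingEnd ℂ (c n))
    (heq : ∀ n : ℤ, I * n * c n = a * (convSin c n * exp (-(I * n * τ)))) :
    (∀ t : ℝ, Summable fun n : ℤ => c n * exp (I * n * t)) ∧
    ∃ g : ℝ → ℝ,
      (∀ t : ℝ, (g t : ℂ) = ∑' n : ℤ, c n * exp (I * n * t)) ∧
      Function.Periodic g (2 * π) ∧ ContDiff ℝ 1 g ∧
      ∀ t : ℝ, deriv g t = a * Real.sin (g (t - τ)) := by
  have hreal := ofReal_re_fourierSeries hsymm
  have hderiv (t : ℝ) : HasDerivAt (fun s => (fourierSeries c s).re)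
      (a * Real.sin (fourierSeries c (t - τ)).re) t := by
    have hcomplex := hasDerivAt_fourierSeries_of_delayed_convSin hc heq t
    rw [← hreal (t - τ), ← ofReal_sin, ← ofReal_mul] at hcomplex
    exact reCLM.hasFDerivAt.comp_hasDerivAt t hcomplex
  refine ⟨summable_mul_expAddChar hc, fun t => (fourierSeries c t).re, hreal,
    (fourierSeries_periodic c).comp re, ?_, fun t => (hderiv t).deriv⟩
  exact contDiff_one_of_hasDerivAt_delayed (F := fun y => a * Real.sin y) (by fun_prop) hderiv

/-- Theorem `tw:fourier`, ⇐: if `c ∈ X` satisfies the Fourier equations, then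
`x(t) = Σ c_n e^{int}` is a well-defined real-valued `2π`-periodic `C¹` solution of
`x'(t) = -(K/τ) sin(x(t-τ))`. -/
theorem fourier_equations_imply_solution (K τ : ℝ) (hK : 0 < K) (hτ : 0 < τ)
    (c : ℤ → ℂ) (hcX : ∃ β > 0, memX β c)
    (heq : ∀ n : ℤ, Complex.I * n * c n =
      -((K / τ : ℝ) : ℂ) *
        ∑' k : ℕ, ((-1) ^ k / (Nat.factorial (2 * k + 1) : ℂ)) * convPow c (2 * k + 1) n *
          Complex.exp (-(Complex.I * n * τ))) :
    (∀ t : ℝ, Summable (fun n : ℤ => c n * Complex.exp (Complex.I * n * t))) ∧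
    ∃ g : ℝ → ℝ,
      (∀ t : ℝ, (g t : ℂ) = ∑' n : ℤ, c n * Complex.exp (Complex.I * n * t)) ∧
      Function.Periodic g (2 * π) ∧ ContDiff ℝ 1 g ∧
      ∀ t : ℝ, deriv g t = -(K / τ) * Real.sin (g (t - τ)) := by
  obtain ⟨β, -, hX⟩ := hcX
  exact fourier_equations_imply_solution_general (-(K / τ)) τ c hX.summable hX.2
    fun n => by rw [heq n, tsum_mul_right, convSin, ofReal_neg]
end

section
/- For every β > 0, the convolution map (x, y) ↦ x*y is continuous as a map from X_β × X_β to ℂ^ℤ, where X_β carries the product (componentwise) topology and ℂ^ℤ the product topology. -/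
open scoped Real
open Complex Filter

theorem summable_one_div_abs_int_add_one_pow {p : ℕ} (hp : 1 < p) :
    Summable fun n : ℤ => 1 / (|(n : ℝ)| + 1) ^ p := by
  have summable_nat : Summable fun n : ℕ => 1 / ((n : ℝ) + 1) ^ p := by
    exact_mod_cast (summable_nat_add_iff 1).2 (Real.summable_one_div_nat_pow.2 hp)
  exact .of_nat_of_neg (by simpa using summable_nat) (by simpa using summable_nat)

theorem continuous_tsum_mul_of_norm_le {X ι R : Type*} [TopologicalSpace X] [NonUnitalNormedRing R]
    [CompleteSpace R] {f g : X → ι → R} {a : ι → ℝ} {C : ℝ}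
    (hf : ∀ i, Continuous fun p => f p i) (hg : ∀ i, Continuous fun p => g p i)
    (ha : Summable a) (hfa : ∀ p i, ‖f p i‖ ≤ a i) (hgC : ∀ p i, ‖g p i‖ ≤ C) :
    Continuous fun p => ∑' i, f p i * g p i := by
  refine continuous_tsum (fun i => (hf i).mul (hg i)) (ha.mul_right C) fun i p => ?_
  calc ‖f p i * g p i‖ ≤ ‖f p i‖ * ‖g p i‖ := norm_mul_le _ _
    _ ≤ a i * C :=
      mul_le_mul (hfa p i) (hgC p i) (norm_nonneg _) ((norm_nonneg _).trans (hfa p i))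

namespace memX

variable {β : ℝ} {x : ℤ → ℂ}

theorem nonneg (hx : memX β x) : 0 ≤ β := by
  simpa using (norm_nonneg (x 0)).trans (hx.1 0)

theorem norm_apply_le (hx : memX β x) (n : ℤ) : ‖x n‖ ≤ β :=
  (hx.1 n).trans <| div_le_self hx.nonneg <| one_le_pow₀ <| le_add_of_nonneg_left <| abs_nonneg _

end memX

theorem summable_memX_bound (β : ℝ) : Summable fun n : ℤ => β / (|(n : ℝ)| + 1) ^ 2 := by
  simpa only [mul_one_div] using
    (summable_one_div_abs_int_add_one_pow one_lt_two).mul_left β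

theorem conv_continuous_on_Xbeta_general {X : Type*} [TopologicalSpace X] {f g : X → ℤ → ℂ}
    {a : ℤ → ℝ} {C : ℝ} (hf : Continuous f) (hg : Continuous g) (ha : Summable a)
    (hfa : ∀ p k, ‖f p k‖ ≤ a k) (hgC : ∀ p k, ‖g p k‖ ≤ C) :
    Continuous fun p => conv (f p) (g p) :=
  continuous_pi fun n => continuous_tsum_mul_of_norm_le (fun k => continuous_pi_iff.1 hf k)
    (fun k => continuous_pi_iff.1 hg (n - k)) ha hfa fun p k => hgC p (n - k)

/-- convolution is continuous on `X_β × X_β` (product/componentwise topology). -/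
theorem conv_continuous_on_Xbeta (β : ℝ) (hβ : 0 < β) :
    Continuous (fun p : {x : ℤ → ℂ // memX β x} × {x : ℤ → ℂ // memX β x} =>
      conv p.1.val p.2.val) :=
  conv_continuous_on_Xbeta_general (continuous_subtype_val.comp continuous_fst)
    (continuous_subtype_val.comp continuous_snd) (summable_memX_bound β)
    (fun p => p.1.2.1) fun p => p.2.2.norm_apply_le
end
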